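/- arXiv:2311.12177 — 9 statements merged into one kernel-verified Lean document; each statement's English description precedes it below -/
import Mathlib

section
/- Let σ > 0, r, α, β, γ, ξ be real constants and b > 0. Set μ = (σ² − 2r)/(2σ²), c = −(r − σ²/2)²/(2σ²), z₁ = αb² + βbμ + γ(μ−1)μ − γξ², z₂ = bβ + γ(2μ−1), A = sin(ξ·ln b)·z₁ + ξ·z₂·cos(ξ·ln b), and B = −cos(ξ·ln b)·z₁ + ξ·z₂·sin(ξ·ln b). Then the function w(S,t) = e^{−ξ²σ²t/2 + ct} S^μ (A·cos(ξ·ln S) + B·sin(ξ·ln S)) satisfies the homogeneous second-order Robin boundary condition α·w(b,t) + β·∂w/∂S(b,t) + γ·∂²w/∂S²(b,t) = 0 for every t ∈ ℝ. -/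
/-! With `θ = ξ log S`, the functions `S ^ m * (P cos θ + Q sin θ)` are stable under
differentiation: `d/dS` lowers the exponent `m` by one and sends `(P, Q)` to
`(m P + ξ Q, m Q - ξ P)` (`hasDerivAt_rpow_mul_trig`). Applying this twice at `S = b`, the boundary
expression is `b ^ (μ - 2)` times the exponential times
`z₁ (A cos θ + B sin θ) + ξ z₂ (B cos θ - A sin θ)`. The choice of `A` and `B` makes the first
bracket `ξ z₂` and the second `-z₁`, so the two terms cancel. -/

theorem hasDerivAt_rpow_mul_trig (K m ξ P Q : ℝ) {s : ℝ} (hs : 0 < s) :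
    HasDerivAt
      (fun x : ℝ => K * x ^ m * (P * Real.cos (ξ * Real.log x) + Q * Real.sin (ξ * Real.log x)))
      (K * s ^ (m - 1) * ((m * P + ξ * Q) * Real.cos (ξ * Real.log s)
        + (m * Q - ξ * P) * Real.sin (ξ * Real.log s))) s := by
  have hl : HasDerivAt (fun x : ℝ => ξ * Real.log x) (ξ * s⁻¹) s :=
    (Real.hasDerivAt_log hs.ne').const_mul ξ
  have hp : HasDerivAt (fun x : ℝ => x ^ m) (m * s ^ (m - 1)) s :=
    Real.hasDerivAt_rpow_const (Or.inl hs.ne')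
  have h := (hp.const_mul K).mul ((hl.cos.const_mul P).add (hl.sin.const_mul Q))
  refine h.congr_deriv ?_
  have hm : s ^ m = s ^ (m - 1) * s := by
    rw [Real.rpow_sub_one hs.ne']
    field_simp
  simp only [hm, Pi.add_apply]
  field_simp
  ring

/-- With μ = (σ²−2r)/(2σ²), c = −(r−σ²/2)²/(2σ²), z₁ = αb² + βbμ + γ(μ−1)μ − γξ²,
z₂ = bβ + γ(2μ−1), A = sin(ξ ln b)z₁ + ξ z₂ cos(ξ ln b), B = −cos(ξ ln b)z₁ + ξ z₂ sin(ξ ln b),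
the function w(S,t) = e^{−ξ²σ²t/2+ct} S^μ (A cos(ξ ln S) + B sin(ξ ln S)) satisfies the
homogeneous second-order Robin condition α w(b,t) + β w_S(b,t) + γ w_SS(b,t) = 0 for all t. -/
theorem blackScholes_secondOrderRobin_homogeneous
    (σ r α β γ ξ b : ℝ) (hσ : 0 < σ) (hb : 0 < b)
    (μ c z₁ z₂ A B : ℝ)
    (hμ : μ = (σ ^ 2 - 2 * r) / (2 * σ ^ 2))
    (hc : c = -(r - σ ^ 2 / 2) ^ 2 / (2 * σ ^ 2))
    (hz₁ : z₁ = α * b ^ 2 + β * b * μ + γ * (μ - 1) * μ - γ * ξ ^ 2)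
    (hz₂ : z₂ = b * β + γ * (2 * μ - 1))
    (hA : A = Real.sin (ξ * Real.log b) * z₁ + ξ * z₂ * Real.cos (ξ * Real.log b))
    (hB : B = -Real.cos (ξ * Real.log b) * z₁ + ξ * z₂ * Real.sin (ξ * Real.log b))
    (w : ℝ → ℝ → ℝ)
    (hw : ∀ S t : ℝ, w S t =
      Real.exp (-ξ ^ 2 * σ ^ 2 * t / 2 + c * t) * S ^ μ *
        (A * Real.cos (ξ * Real.log S) + B * Real.sin (ξ * Real.log S))) :
    ∀ t : ℝ,
      α * w b t + β * deriv (fun s => w s t) b + γ * deriv (deriv (fun s => w s t)) b = 0 := by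
  intro t
  set K := Real.exp (-ξ ^ 2 * σ ^ 2 * t / 2 + c * t) with hK
  have hfun : (fun s => w s t) = fun x : ℝ => K * x ^ μ *
      (A * Real.cos (ξ * Real.log x) + B * Real.sin (ξ * Real.log x)) :=
    funext fun x => hw x t
  -- The derivative formula holds only for `s > 0`, so the second derivative at `b` is computed
  -- from the germ of the first one.
  have hd : deriv (fun s => w s t) =ᶠ[nhds b] fun s : ℝ => K * s ^ (μ - 1) *
      ((μ * A + ξ * B) * Real.cos (ξ * Real.log s)
        + (μ * B - ξ * A) * Real.sin (ξ * Real.log s)) := by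
    filter_upwards [lt_mem_nhds hb] with s hs
    rw [hfun]
    exact (hasDerivAt_rpow_mul_trig K μ ξ A B hs).deriv
  rw [hd.deriv_eq, hd.eq_of_nhds, hw b t, ← hK,
    (hasDerivAt_rpow_mul_trig K (μ - 1) ξ (μ * A + ξ * B) (μ * B - ξ * A) hb).deriv]
  have h1 : b ^ (μ - 1) = b ^ (μ - 1 - 1) * b := by
    rw [Real.rpow_sub_one hb.ne' (μ - 1)]
    field_simp
  have h0 : b ^ μ = b ^ (μ - 1 - 1) * b * b := by
    rw [← h1, Real.rpow_sub_one hb.ne' μ]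
    field_simp
  rw [h0, h1]
  have hcs := Real.sin_sq_add_cos_sq (ξ * Real.log b)
  generalize b ^ (μ - 1 - 1) = R
  generalize Real.cos (ξ * Real.log b) = C at *
  generalize Real.sin (ξ * Real.log b) = D at *
  have e1 : A * C + B * D = ξ * z₂ := by
    rw [hA, hB]
    linear_combination ξ * z₂ * hcs
  have e2 : B * C - A * D = -z₁ := by
    rw [hA, hB]
    linear_combination -z₁ * hcs
  have key : z₁ * (A * C + B * D) + ξ * z₂ * (B * C - A * D) = 0 := by
    rw [e1, e2]
    ring
  clear hA hB e1 e2
  rw [hz₁, hz₂] at key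
  linear_combination K * R * key
end

section
/- Let σ > 0, r, α, β, ξ be real constants and b > 0. Set μ = (σ² − 2r)/(2σ²), c = −(r − σ²/2)²/(2σ²), A = βξ·cos(ξ·ln b) + bα·sin(ξ·ln b) + βμ·sin(ξ·ln b), and B = −bα·cos(ξ·ln b) − βμ·cos(ξ·ln b) + βξ·sin(ξ·ln b). Then the function w(S,t) = e^{−ξ²σ²t/2 + ct} S^μ (A·cos(ξ·ln S) + B·sin(ξ·ln S)) satisfies the homogeneous Robin boundary condition α·w(b,t) + β·∂w/∂S(b,t) = 0 for every t ∈ ℝ. -/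
/-!
Put `θ = ξ ln b`. Since `sin² + cos² = 1`, the coefficients satisfy `A cos θ + B sin θ = βξ` and
`B cos θ - A sin θ = -(bα + βμ)`. Hence, up to the common factor `e^{…} b^μ`, the value of `w` at
`b` is `βξ` and its `S`-derivative is `(μ βξ - ξ (bα + βμ)) / b = -ξα`, so the Robin combination
is `αβξ - βξα = 0`.
-/


/-- With μ = (σ²−2r)/(2σ²), c = −(r−σ²/2)²/(2σ²),
A = βξ cos(ξ ln b) + bα sin(ξ ln b) + βμ sin(ξ ln b) and
B = −bα cos(ξ ln b) − βμ cos(ξ ln b) + βξ sin(ξ ln b),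
the function w(S,t) = e^{−ξ²σ²t/2+ct} S^μ (A cos(ξ ln S) + B sin(ξ ln S)) satisfies the
homogeneous Robin condition α w(b,t) + β w_S(b,t) = 0 for all t. -/
theorem blackScholes_robin_homogeneous
    (σ r α β ξ b : ℝ) (hσ : 0 < σ) (hb : 0 < b)
    (μ c A B : ℝ)
    (hμ : μ = (σ ^ 2 - 2 * r) / (2 * σ ^ 2))
    (hc : c = -(r - σ ^ 2 / 2) ^ 2 / (2 * σ ^ 2))
    (hA : A = β * ξ * Real.cos (ξ * Real.log b) + b * α * Real.sin (ξ * Real.log b) +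
      β * μ * Real.sin (ξ * Real.log b))
    (hB : B = -(b * α) * Real.cos (ξ * Real.log b) - β * μ * Real.cos (ξ * Real.log b) +
      β * ξ * Real.sin (ξ * Real.log b))
    (w : ℝ → ℝ → ℝ)
    (hw : ∀ S t : ℝ, w S t =
      Real.exp (-ξ ^ 2 * σ ^ 2 * t / 2 + c * t) * S ^ μ *
        (A * Real.cos (ξ * Real.log S) + B * Real.sin (ξ * Real.log S))) :
    ∀ t : ℝ, α * w b t + β * deriv (fun s => w s t) b = 0 := by
  intro t
  have hb0 : b ≠ 0 := hb.ne'
  have hlog : HasDerivAt (fun s => ξ * Real.log s) (ξ * b⁻¹) b :=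
    (Real.hasDerivAt_log hb0).const_mul ξ
  have hd := ((Real.hasDerivAt_rpow_const (x := b) (p := μ) (Or.inl hb0)).const_mul
    (Real.exp (-ξ ^ 2 * σ ^ 2 * t / 2 + c * t))).mul
      ((hlog.cos.const_mul A).add (hlog.sin.const_mul B))
  have hderiv := (hd.congr_of_eventuallyEq (f₁ := fun s => w s t)
    (Filter.Eventually.of_forall fun s => hw s t)).deriv
  rw [hderiv, hw]
  simp only [Pi.add_apply]
  rw [Real.rpow_sub_one hb0]
  have hsc := Real.sin_sq_add_cos_sq (ξ * Real.log b)
  generalize Real.sin (ξ * Real.log b) = s at *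
  generalize Real.cos (ξ * Real.log b) = k at *
  have hval : A * k + B * s = β * ξ := by
    rw [hA, hB]; linear_combination β * ξ * hsc
  have hder : B * k - A * s = -(b * α + β * μ) := by
    rw [hA, hB]; linear_combination -(b * α + β * μ) * hsc
  generalize Real.exp _ = E
  generalize b ^ μ = P
  field_simp
  linear_combination (E * P * (α * b + β * μ)) * hval + E * P * β * ξ * hder
end

section
/- Let σ > 0, r, α, β be real constants and b > 0. Set μ = (σ² − 2r)/(2σ²) and assume α + μβ/b ≠ 0. Define h(S,t) = (2(S/b)^μ / (σ²(α + μβ/b))) · e^{−σ²μ²t/2} · ( σ²t/2 + (1/2)(ln(S/b))² ). Then: (i) h satisfies the Black–Scholes equation ∂h/∂t = (1/2)σ²S² ∂²h/∂S² + rS ∂h/∂S at every point with S > 0, t ∈ ℝ; (ii) h(S,0) = (1/σ²)(α + μβ/b)^{−1}(S/b)^μ (ln(S/b))² for every S > 0; and (iii) α·h(b,t) + β·∂h/∂S(b,t) = t·e^{−σ²μ²t/2} for every t ∈ ℝ. -/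
/-!
In the variable `x = log (S / b)`, a function `(S / b) ^ μ * P x` with `P` a quadratic polynomial
is mapped by `S ∂/∂S` to a function of the same kind, with `P` replaced by `μ P + P'`
(`hasDerivAt_rpow_mul_quadratic`). Since `S² ∂²/∂S² = (S ∂/∂S)² - S ∂/∂S` and `r - σ² / 2 = -σ² μ`,
the spatial Black–Scholes operator sends `(S / b) ^ μ * P x` to
`(S / b) ^ μ * (σ² / 2) * (P'' - μ² P) x`: this choice of `μ` cancels the first-order term.
The stated `h` has `P x = σ² t / 2 + x² / 2` up to a factor independent of `S`, and
`exp (-σ² μ² t / 2) * P x` satisfies the resulting equation. At `S = b` one has `x = 0`, so `∂h/∂S = (μ / b) h`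
there, which gives the Robin data.
-/

/-- `S ∂/∂S` acts on `(S / b) ^ μ * P (log (S / b))`, for `P` quadratic, by `P ↦ μ P + P'`. -/
theorem hasDerivAt_rpow_mul_quadratic (b μ p q c S : ℝ) (hb : 0 < b) (hS : 0 < S) :
    HasDerivAt (fun s => (s / b) ^ μ * (p + q * Real.log (s / b) + c * Real.log (s / b) ^ 2))
      (1 / S * ((S / b) ^ μ * ((μ * p + q) + (μ * q + 2 * c) * Real.log (S / b)
        + (μ * c) * Real.log (S / b) ^ 2))) S := by
  have hx : 0 < S / b := div_pos hS hb
  have hd : HasDerivAt (fun s : ℝ => s / b) (1 / b) S := (hasDerivAt_id S).div_const b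
  have hl : HasDerivAt (fun s : ℝ => Real.log (s / b)) (1 / S) S := by
    convert hd.log hx.ne' using 1
    field_simp
  have hp : HasDerivAt (fun s : ℝ => (s / b) ^ μ) (1 / S * (μ * (S / b) ^ μ)) S := by
    convert hd.rpow_const (p := μ) (Or.inl hx.ne') using 1
    rw [Real.rpow_sub_one hx.ne']
    field_simp
  refine (hp.mul (((hl.const_mul q).const_add p).add ((hl.pow 2).const_mul c))).congr_deriv ?_
  simp only [Pi.add_apply, Pi.pow_apply]
  push_cast
  ring

/-- With μ = (σ²−2r)/(2σ²) and α + μβ/b ≠ 0, the function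
h(S,t) = (2(S/b)^μ/(σ²(α+μβ/b))) e^{−σ²μ²t/2} (σ²t/2 + (1/2)(ln(S/b))²)
(i) satisfies the Black–Scholes equation for S > 0,
(ii) has initial value h(S,0) = (1/σ²)(α+μβ/b)⁻¹(S/b)^μ(ln(S/b))², and
(iii) has Robin boundary data α h(b,t) + β h_S(b,t) = t e^{−σ²μ²t/2}. -/
theorem blackScholes_robin_example_solution
    (σ r α β b : ℝ) (hσ : 0 < σ) (hb : 0 < b)
    (μ : ℝ) (hμ : μ = (σ ^ 2 - 2 * r) / (2 * σ ^ 2))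
    (hne : α + μ * β / b ≠ 0)
    (h : ℝ → ℝ → ℝ)
    (hh : ∀ S t : ℝ, h S t =
      (2 * (S / b) ^ μ / (σ ^ 2 * (α + μ * β / b))) * Real.exp (-σ ^ 2 * μ ^ 2 * t / 2) *
        (σ ^ 2 * t / 2 + (1 / 2) * (Real.log (S / b)) ^ 2)) :
    (∀ S t : ℝ, 0 < S →
      deriv (fun τ => h S τ) t =
        (1 / 2) * σ ^ 2 * S ^ 2 * deriv (deriv (fun s => h s t)) S +
          r * S * deriv (fun s => h s t) S) ∧
    (∀ S : ℝ, 0 < S →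
      h S 0 = (1 / σ ^ 2) * (α + μ * β / b)⁻¹ * (S / b) ^ μ * (Real.log (S / b)) ^ 2) ∧
    (∀ t : ℝ,
      α * h b t + β * deriv (fun s => h s t) b = t * Real.exp (-σ ^ 2 * μ ^ 2 * t / 2)) := by
  have hσ0 : σ ≠ 0 := hσ.ne'
  have hr : r = σ ^ 2 / 2 - σ ^ 2 * μ := by
    rw [hμ]
    field_simp
    ring
  set k := α + μ * β / b with hk
  -- `h` and `∂h/∂S` in the form covered by `hasDerivAt_rpow_mul_quadratic`.
  have h0 : ∀ t, (fun s => h s t) = fun s =>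
      (2 / (σ ^ 2 * k) * Real.exp (-σ ^ 2 * μ ^ 2 * t / 2)) *
        ((s / b) ^ μ * (σ ^ 2 * t / 2 + 0 * Real.log (s / b) + 1 / 2 * Real.log (s / b) ^ 2)) := by
    intro t
    funext s
    rw [hh]
    ring
  have h1 : ∀ t s, 0 < s → deriv (fun s => h s t) s =
      (2 / (σ ^ 2 * k) * Real.exp (-σ ^ 2 * μ ^ 2 * t / 2)) *
        (1 / s * ((s / b) ^ μ * ((μ * (σ ^ 2 * t / 2) + 0) + (μ * 0 + 2 * (1 / 2)) * Real.log (s / b)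
          + (μ * (1 / 2)) * Real.log (s / b) ^ 2))) := by
    intro t s hs
    rw [h0]
    exact ((hasDerivAt_rpow_mul_quadratic b μ _ _ _ s hb hs).const_mul _).deriv
  refine ⟨fun S t hS => ?_, fun S hS => ?_, fun t => ?_⟩
  · have hS0 : S ≠ 0 := ne_of_gt hS
    -- The formula for `∂h/∂S` holds only for positive `s`, hence near `S`.
    have hev : deriv (fun s => h s t) =ᶠ[nhds S] _ :=
      Filter.eventuallyEq_of_mem (Ioi_mem_nhds hS) (fun s hs => h1 t s hs)
    have h2 := (((((hasDerivAt_id S).inv hS0).congr_of_eventuallyEq (f₁ := fun s : ℝ => 1 / s)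
      (Filter.Eventually.of_forall fun s => by simp)).mul
      (hasDerivAt_rpow_mul_quadratic b μ (μ * (σ ^ 2 * t / 2) + 0) (μ * 0 + 2 * (1 / 2))
        (μ * (1 / 2)) S hb hS)).const_mul
      (2 / (σ ^ 2 * k) * Real.exp (-σ ^ 2 * μ ^ 2 * t / 2))).deriv
    have h3 := hev.deriv_eq.trans h2
    have he : HasDerivAt (fun τ : ℝ => Real.exp (-σ ^ 2 * μ ^ 2 * τ / 2))
        (Real.exp (-σ ^ 2 * μ ^ 2 * t / 2) * (-σ ^ 2 * μ ^ 2 * 1 / 2)) t :=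
      (((hasDerivAt_id t).const_mul (-σ ^ 2 * μ ^ 2)).div_const 2).exp
    have hlin : HasDerivAt
        (fun τ : ℝ => σ ^ 2 * τ / 2 + (1 / 2) * (Real.log (S / b)) ^ 2) (σ ^ 2 * 1 / 2) t :=
      (((hasDerivAt_id t).const_mul (σ ^ 2)).div_const 2).add_const _
    have ht := ((he.const_mul (2 * (S / b) ^ μ / (σ ^ 2 * k))).mul hlin).deriv
    have hft : (fun τ => h S τ) = _ := funext (hh S)
    rw [h3, h1 t S hS, hft]
    refine ht.trans ?_
    rw [hr]
    simp only [id]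
    field_simp
    ring
  · rw [hh]
    simp
    field_simp
  · rw [h1 t b hb, hh, div_self hb.ne']
    simp only [Real.log_one, Real.one_rpow]
    have hα : α = k - μ * β / b := by rw [hk]; ring
    rw [hα]
    field_simp
    ring
end

section
/- Let Ω ⊆ ℝ be an open interval, and let P, Q, R : Ω → ℝ be continuous functions and ρ, μ : Ω → ℝ twice differentiable functions satisfying, for all x ∈ Ω: (i) P(x)ρ''(x) + Q(x)ρ'(x) + R(x)ρ(x) = 0, (ii) 1 − P(x)(μ'(x))² = 0, and (iii) Q(x)ρ(x)μ'(x) + 2P(x)μ'(x)ρ'(x) + P(x)ρ(x)μ''(x) = 0. Then for every ξ ∈ ℝ and every constant a ∈ ℝ, the functions w₁(x,t) = ρ(x)·cos(ξ(μ(x) − a))·e^{−ξ²t} and w₂(x,t) = ρ(x)·sin(ξ(μ(x) − a))·e^{−ξ²t} satisfy the PDE ∂u/∂t = P(x)∂²u/∂x² + Q(x)∂u/∂x + R(x)u at every point (x,t) with x ∈ Ω and t ∈ ℝ. -/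
/-!
Both solutions have the form `u(x,t) = ρ(x) f(ξ(m(x) - a)) e^{-ξ²t}` with `f'' = -f`; write `g = f'`.
By the product and chain rules `P u_xx + Q u_x + R u` equals `e^{-ξ²t}` times
`f · (Pρ'' + Qρ' + Rρ) + ξ g · (Qρm' + 2Pm'ρ' + Pρm'') - ξ² ρ f · P(m')²`,
where `f` and `g` are evaluated at `ξ(m(x) - a)`. The first two brackets vanish by (i) and (iii), and
`P(m')² = 1` by (ii), leaving `-ξ² u = u_t`. The cosine and sine families are the cases
`(f, g) = (cos, -sin)` and `(f, g) = (sin, cos)`.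
-/

/-- The equation at a point, for any profile `f` with `f' = g` and `g' = -f`. -/
theorem pde_of_oscillating_profile
    {Ω : Set ℝ} (hΩ : IsOpen Ω) {P Q R ρ m f g : ℝ → ℝ}
    (hf : ∀ z, HasDerivAt f (g z) z) (hg : ∀ z, HasDerivAt g (-f z) z)
    (hρ1 : ∀ x ∈ Ω, DifferentiableAt ℝ ρ x)
    (hρ2 : ∀ x ∈ Ω, DifferentiableAt ℝ (deriv ρ) x)
    (hm1 : ∀ x ∈ Ω, DifferentiableAt ℝ m x)
    (hm2 : ∀ x ∈ Ω, DifferentiableAt ℝ (deriv m) x)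
    (heq1 : ∀ x ∈ Ω, P x * deriv (deriv ρ) x + Q x * deriv ρ x + R x * ρ x = 0)
    (heq2 : ∀ x ∈ Ω, 1 - P x * (deriv m x) ^ 2 = 0)
    (heq3 : ∀ x ∈ Ω,
      Q x * ρ x * deriv m x + 2 * P x * deriv m x * deriv ρ x + P x * ρ x * deriv (deriv m) x = 0)
    (ξ a : ℝ) {w : ℝ → ℝ → ℝ}
    (hw : ∀ x t : ℝ, w x t = ρ x * f (ξ * (m x - a)) * Real.exp (-ξ ^ 2 * t))
    {x : ℝ} (hx : x ∈ Ω) (t : ℝ) :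
    deriv (fun τ => w x τ) t =
      P x * deriv (deriv (fun y => w y t)) x + Q x * deriv (fun y => w y t) x + R x * w x t := by
  have hphase : ∀ y ∈ Ω, HasDerivAt (fun y => ξ * (m y - a)) (ξ * deriv m y) y := fun y hy =>
    ((hm1 y hy).hasDerivAt.sub_const a).const_mul ξ
  have hF : ∀ y ∈ Ω, HasDerivAt (fun y => f (ξ * (m y - a)))
      (g (ξ * (m y - a)) * (ξ * deriv m y)) y := fun y hy =>
    (hf (ξ * (m y - a))).comp y (hphase y hy)
  have hG : HasDerivAt (fun y => g (ξ * (m y - a)))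
      (-f (ξ * (m x - a)) * (ξ * deriv m x)) x :=
    (hg (ξ * (m x - a))).comp x (hphase x hx)
  have ht : HasDerivAt (fun τ => w x τ)
      (ρ x * f (ξ * (m x - a)) * (Real.exp (-ξ ^ 2 * t) * (-ξ ^ 2 * 1))) t := by
    simp only [hw]
    exact (((hasDerivAt_id t).const_mul (-ξ ^ 2)).exp).const_mul _
  have hx1 : ∀ y ∈ Ω, HasDerivAt (fun y => w y t)
      ((deriv ρ y * f (ξ * (m y - a)) + ρ y * (g (ξ * (m y - a)) * (ξ * deriv m y)))
        * Real.exp (-ξ ^ 2 * t)) y := by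
    intro y hy
    simp only [hw]
    exact ((hρ1 y hy).hasDerivAt.mul (hF y hy)).mul_const _
  -- Openness of `Ω` makes the first-derivative formula hold near `x`, so it can be differentiated.
  have hev : deriv (fun y => w y t) =ᶠ[nhds x] fun y =>
      (deriv ρ y * f (ξ * (m y - a)) + ρ y * (g (ξ * (m y - a)) * (ξ * deriv m y)))
        * Real.exp (-ξ ^ 2 * t) := by
    filter_upwards [hΩ.mem_nhds hx] with y hy using (hx1 y hy).deriv
  have hx2 := (((hρ2 x hx).hasDerivAt.mul (hF x hx)).add ((hρ1 x hx).hasDerivAt.mul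
    (hG.mul ((hm2 x hx).hasDerivAt.const_mul ξ)))).mul_const (Real.exp (-ξ ^ 2 * t))
  have hxx := (hx2.congr_of_eventuallyEq hev).deriv
  rw [ht.deriv, hxx, (hx1 x hx).deriv, hw]
  simp only [Pi.mul_apply]
  generalize Real.exp (-ξ ^ 2 * t) = E
  generalize f (ξ * (m x - a)) = F
  generalize g (ξ * (m x - a)) = G
  linear_combination (-E * F) * heq1 x hx - (E * ξ * G) * heq3 x hx
    - (ρ x * F * E * ξ ^ 2) * heq2 x hx

/-- If P, Q, R are continuous on an open interval Ω and ρ, μ are twice differentiable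
and satisfy (i) Pρ'' + Qρ' + Rρ = 0, (ii) 1 − P(μ')² = 0, (iii) Qρμ' + 2Pμ'ρ' + Pρμ'' = 0
on Ω, then for every ξ, a ∈ ℝ, w₁(x,t) = ρ(x)cos(ξ(μ(x)−a))e^{−ξ²t} and
w₂(x,t) = ρ(x)sin(ξ(μ(x)−a))e^{−ξ²t} satisfy u_t = P u_xx + Q u_x + R u on Ω × ℝ. -/
theorem elementary_solutions_sine_cosine_family
    (Ω : Set ℝ) (hΩ : IsOpen Ω) (hconn : Ω.OrdConnected)
    (P Q R ρ m : ℝ → ℝ)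
    (hP : ContinuousOn P Ω) (hQ : ContinuousOn Q Ω) (hR : ContinuousOn R Ω)
    (hρ1 : ∀ x ∈ Ω, DifferentiableAt ℝ ρ x)
    (hρ2 : ∀ x ∈ Ω, DifferentiableAt ℝ (deriv ρ) x)
    (hm1 : ∀ x ∈ Ω, DifferentiableAt ℝ m x)
    (hm2 : ∀ x ∈ Ω, DifferentiableAt ℝ (deriv m) x)
    (heq1 : ∀ x ∈ Ω, P x * deriv (deriv ρ) x + Q x * deriv ρ x + R x * ρ x = 0)
    (heq2 : ∀ x ∈ Ω, 1 - P x * (deriv m x) ^ 2 = 0)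
    (heq3 : ∀ x ∈ Ω,
      Q x * ρ x * deriv m x + 2 * P x * deriv m x * deriv ρ x + P x * ρ x * deriv (deriv m) x = 0)
    (ξ a : ℝ)
    (w₁ w₂ : ℝ → ℝ → ℝ)
    (hw₁ : ∀ x t : ℝ, w₁ x t = ρ x * Real.cos (ξ * (m x - a)) * Real.exp (-ξ ^ 2 * t))
    (hw₂ : ∀ x t : ℝ, w₂ x t = ρ x * Real.sin (ξ * (m x - a)) * Real.exp (-ξ ^ 2 * t)) :
    (∀ x ∈ Ω, ∀ t : ℝ,
      deriv (fun τ => w₁ x τ) t =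
        P x * deriv (deriv (fun y => w₁ y t)) x + Q x * deriv (fun y => w₁ y t) x +
          R x * w₁ x t) ∧
    (∀ x ∈ Ω, ∀ t : ℝ,
      deriv (fun τ => w₂ x τ) t =
        P x * deriv (deriv (fun y => w₂ y t)) x + Q x * deriv (fun y => w₂ y t) x +
          R x * w₂ x t) := by
  exact ⟨fun x hx t => pde_of_oscillating_profile (g := fun z => -Real.sin z) hΩ
      Real.hasDerivAt_cos (fun z => (Real.hasDerivAt_sin z).neg)
      hρ1 hρ2 hm1 hm2 heq1 heq2 heq3 ξ a hw₁ hx t,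
    fun x hx t => pde_of_oscillating_profile hΩ Real.hasDerivAt_sin Real.hasDerivAt_cos
      hρ1 hρ2 hm1 hm2 heq1 heq2 heq3 ξ a hw₂ hx t⟩
end

section
/- Let Ω ⊆ ℝ be an open interval, let P, Q, R : Ω → ℝ be continuous functions and ρ, μ : Ω → ℝ twice differentiable functions satisfying, for all x ∈ Ω: (i) P(x)ρ''(x) + Q(x)ρ'(x) + R(x)ρ(x) = 0, (ii) 1 − P(x)(μ'(x))² = 0, and (iii) Q(x)ρ(x)μ'(x) + 2P(x)μ'(x)ρ'(x) + P(x)ρ(x)μ''(x) = 0. Let r : [0,∞) → ℝ be a continuous function. Then for every ξ ∈ ℝ and every constant a ∈ ℝ, the function v(x,t) = ρ(x)·cos(ξ(μ(x) − a))·exp(−ξ² ∫₀ᵗ r(s) ds) satisfies ∂v/∂t = r(t)·( P(x)∂²v/∂x² + Q(x)∂v/∂x + R(x)v ) at every point (x,t) with x ∈ Ω and t > 0, and likewise for the function obtained by replacing cos with sin. -/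
/-!
The solutions separate variables. For any phase `c`, the spatial profile
`g = ρ cos (ξ (m - a) - c)` is an eigenfunction of `L = P ∂² + Q ∂ + R` with eigenvalue `-ξ²`:
in `L g` the cosine terms without `m'` add up to `P ρ'' + Q ρ' + R ρ = 0`, the sine terms are
a multiple of `Q ρ m' + 2 P m' ρ' + P ρ m'' = 0`, and what is left is `-ξ² (P m'²) g = -ξ² g`
(`spatial_eigenfunction`). The temporal factor `exp (-ξ² ∫₀ᵗ r)` solves `E' = -ξ² r E` by the
fundamental theorem of calculus (`hasDerivAt_temporal_factor`). Hence both sides of the equation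
equal `-ξ² r v`. The cosine and sine solutions are the phases `c = 0` and `c = π / 2`.
-/

/-- The profile `ρ cos (ξ (m - a) - c)`, scaled by a constant `E` (the temporal factor at a fixed
time), is an eigenfunction of `P ∂² + Q ∂ + R` with eigenvalue `-ξ²`. -/
lemma spatial_eigenfunction
    {Ω : Set ℝ} (hΩ : IsOpen Ω) {P Q R ρ m : ℝ → ℝ}
    (hρ1 : ∀ x ∈ Ω, DifferentiableAt ℝ ρ x)
    (hρ2 : ∀ x ∈ Ω, DifferentiableAt ℝ (deriv ρ) x)
    (hm1 : ∀ x ∈ Ω, DifferentiableAt ℝ m x)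
    (hm2 : ∀ x ∈ Ω, DifferentiableAt ℝ (deriv m) x)
    (heq1 : ∀ x ∈ Ω, P x * deriv (deriv ρ) x + Q x * deriv ρ x + R x * ρ x = 0)
    (heq2 : ∀ x ∈ Ω, 1 - P x * (deriv m x) ^ 2 = 0)
    (heq3 : ∀ x ∈ Ω,
      Q x * ρ x * deriv m x + 2 * P x * deriv m x * deriv ρ x + P x * ρ x * deriv (deriv m) x = 0)
    (ξ a c E : ℝ) {x : ℝ} (hx : x ∈ Ω) :
    P x * deriv (deriv fun y => ρ y * Real.cos (ξ * (m y - a) - c) * E) x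
      + Q x * deriv (fun y => ρ y * Real.cos (ξ * (m y - a) - c) * E) x
      + R x * (ρ x * Real.cos (ξ * (m x - a) - c) * E)
      = -ξ ^ 2 * (ρ x * Real.cos (ξ * (m x - a) - c) * E) := by
  have hphase : ∀ y ∈ Ω, HasDerivAt (fun z => ξ * (m z - a) - c) (ξ * deriv m y) y := fun y hy =>
    (((hm1 y hy).hasDerivAt.sub_const a).const_mul ξ).sub_const c
  have hfirst : ∀ y ∈ Ω, deriv (fun z => ρ z * Real.cos (ξ * (m z - a) - c) * E) y =
      (deriv ρ y * Real.cos (ξ * (m y - a) - c)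
        + ρ y * (-Real.sin (ξ * (m y - a) - c) * (ξ * deriv m y))) * E := fun y hy =>
    (((hρ1 y hy).hasDerivAt.mul (hphase y hy).cos).mul_const E).deriv
  -- The formula for the first derivative holds on the open set `Ω`, so it can be differentiated.
  have hfirst_near : deriv (fun z => ρ z * Real.cos (ξ * (m z - a) - c) * E) =ᶠ[nhds x]
      fun y => (deriv ρ y * Real.cos (ξ * (m y - a) - c)
        + ρ y * (-Real.sin (ξ * (m y - a) - c) * (ξ * deriv m y))) * E :=
    Filter.eventuallyEq_of_mem (hΩ.mem_nhds hx) hfirst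
  have hρx := (hρ1 x hx).hasDerivAt
  have hsecond := (((hρ2 x hx).hasDerivAt.mul (hphase x hx).cos).add
    (hρx.mul ((hphase x hx).sin.neg.mul ((hm2 x hx).hasDerivAt.const_mul ξ)))).mul_const E
  rw [hfirst_near.deriv_eq, hfirst x hx]
  erw [hsecond.deriv]
  simp only [Pi.mul_apply, Pi.neg_apply]
  linear_combination (Real.cos (ξ * (m x - a) - c) * E) * heq1 x hx
    + (ξ ^ 2 * ρ x * Real.cos (ξ * (m x - a) - c) * E) * heq2 x hx
    - (ξ * Real.sin (ξ * (m x - a) - c) * E) * heq3 x hx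

lemma hasDerivAt_temporal_factor {r : ℝ → ℝ} (hr : ContinuousOn r (Set.Ici 0)) (ξ : ℝ)
    {t : ℝ} (ht : 0 < t) :
    HasDerivAt (fun τ => Real.exp (-ξ ^ 2 * ∫ s in (0:ℝ)..τ, r s))
      (Real.exp (-ξ ^ 2 * ∫ s in (0:ℝ)..t, r s) * (-ξ ^ 2 * r t)) t := by
  have hint : IntervalIntegrable r MeasureTheory.volume 0 t :=
    (hr.mono (by rw [Set.uIcc_of_le ht.le]; exact Set.Icc_subset_Ici_self)).intervalIntegrable
  have hmeas : StronglyMeasurableAtFilter r (nhds t) :=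
    (hr.mono Set.Ioi_subset_Ici_self).stronglyMeasurableAtFilter isOpen_Ioi t ht
  exact ((intervalIntegral.integral_hasDerivAt_right hint hmeas
    (hr.continuousAt (Ici_mem_nhds ht))).const_mul (-ξ ^ 2)).exp

/-- Time-dependent extension: under the same structural hypotheses on P, Q, R, ρ, μ as in the
time-independent case, and with r continuous on [0,∞), the functions
v(x,t) = ρ(x)cos(ξ(μ(x)−a))exp(−ξ²∫₀ᵗ r(s)ds) (and the sine analogue) satisfy
v_t = r(t)(P v_xx + Q v_x + R v) for x ∈ Ω and t > 0. -/
theorem elementary_solutions_time_dependent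
    (Ω : Set ℝ) (hΩ : IsOpen Ω) (hconn : Ω.OrdConnected)
    (P Q R ρ m : ℝ → ℝ)
    (hP : ContinuousOn P Ω) (hQ : ContinuousOn Q Ω) (hR : ContinuousOn R Ω)
    (hρ1 : ∀ x ∈ Ω, DifferentiableAt ℝ ρ x)
    (hρ2 : ∀ x ∈ Ω, DifferentiableAt ℝ (deriv ρ) x)
    (hm1 : ∀ x ∈ Ω, DifferentiableAt ℝ m x)
    (hm2 : ∀ x ∈ Ω, DifferentiableAt ℝ (deriv m) x)
    (heq1 : ∀ x ∈ Ω, P x * deriv (deriv ρ) x + Q x * deriv ρ x + R x * ρ x = 0)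
    (heq2 : ∀ x ∈ Ω, 1 - P x * (deriv m x) ^ 2 = 0)
    (heq3 : ∀ x ∈ Ω,
      Q x * ρ x * deriv m x + 2 * P x * deriv m x * deriv ρ x + P x * ρ x * deriv (deriv m) x = 0)
    (r : ℝ → ℝ) (hr : ContinuousOn r (Set.Ici 0))
    (ξ a : ℝ)
    (v₁ v₂ : ℝ → ℝ → ℝ)
    (hv₁ : ∀ x t : ℝ, v₁ x t =
      ρ x * Real.cos (ξ * (m x - a)) * Real.exp (-ξ ^ 2 * ∫ s in (0:ℝ)..t, r s))
    (hv₂ : ∀ x t : ℝ, v₂ x t =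
      ρ x * Real.sin (ξ * (m x - a)) * Real.exp (-ξ ^ 2 * ∫ s in (0:ℝ)..t, r s)) :
    (∀ x ∈ Ω, ∀ t : ℝ, 0 < t →
      deriv (fun τ => v₁ x τ) t =
        r t * (P x * deriv (deriv (fun y => v₁ y t)) x + Q x * deriv (fun y => v₁ y t) x +
          R x * v₁ x t)) ∧
    (∀ x ∈ Ω, ∀ t : ℝ, 0 < t →
      deriv (fun τ => v₂ x τ) t =
        r t * (P x * deriv (deriv (fun y => v₂ y t)) x + Q x * deriv (fun y => v₂ y t) x +
          R x * v₂ x t)) := by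
  have key : ∀ c : ℝ, ∀ x ∈ Ω, ∀ t : ℝ, 0 < t →
      deriv (fun τ => ρ x * Real.cos (ξ * (m x - a) - c)
          * Real.exp (-ξ ^ 2 * ∫ s in (0:ℝ)..τ, r s)) t =
        r t * (P x * deriv (deriv fun y => ρ y * Real.cos (ξ * (m y - a) - c)
            * Real.exp (-ξ ^ 2 * ∫ s in (0:ℝ)..t, r s)) x
          + Q x * deriv (fun y => ρ y * Real.cos (ξ * (m y - a) - c)
            * Real.exp (-ξ ^ 2 * ∫ s in (0:ℝ)..t, r s)) x
          + R x * (ρ x * Real.cos (ξ * (m x - a) - c)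
            * Real.exp (-ξ ^ 2 * ∫ s in (0:ℝ)..t, r s))) := by
    intro c x hx t ht
    rw [spatial_eigenfunction hΩ hρ1 hρ2 hm1 hm2 heq1 heq2 heq3 ξ a c _ hx,
      ((hasDerivAt_temporal_factor hr ξ ht).const_mul _).deriv]
    ring
  constructor
  · simpa only [hv₁, sub_zero] using key 0
  · simpa only [hv₂, Real.cos_sub_pi_div_two] using key (Real.pi / 2)
end

section
/- Let a, ξ ∈ ℝ. The functions w₁(x,t) = e^{−(ξ²+a²)t/4} e^{−x³/3 − ax/2} cos(xξ/2) and w₂(x,t) = e^{−(ξ²+a²)t/4} e^{−x³/3 − ax/2} sin(xξ/2) satisfy the PDE ∂u/∂t = ∂²u/∂x² + (2x² + a)·∂u/∂x + (x⁴ + ax² + 2x)·u at every point (x,t) ∈ ℝ². -/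
/-!
Put `g(x) = -x³/3 - a x/2`, so that `2x² + a = -2 g'`. Conjugation by `exp g` removes the
first-order term: for `u = T(t) exp(g(x)) c(x)`,
`u_xx - 2 g' u_x = T exp(g) (c'' + (g'' - g'²) c)`. Since
`g'' - g'² = -2x - x⁴ - a x² - a²/4`, the potential cancels all but the constant `-a²/4`, and
`c'' = -(ξ²/4) c` (true of both cosine and sine) turns the right-hand side into
`-(ξ² + a²)/4 · u`, which is `u_t`. The lemma `pde_of_harmonic` carries this out for any such `c`.
-/

/-- The equation holds for every profile `c` with `c' = d` and `d' = -(ξ²/4) c`, which treats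
the cosine and sine solutions together. -/
lemma pde_of_harmonic (a ξ : ℝ) (c d : ℝ → ℝ) (w : ℝ → ℝ → ℝ)
    (hc : ∀ x, HasDerivAt c (d x) x) (hd : ∀ x, HasDerivAt d (-(ξ ^ 2 / 4) * c x) x)
    (hw : ∀ x t : ℝ, w x t =
      Real.exp (-(ξ ^ 2 + a ^ 2) * t / 4) * Real.exp (-x ^ 3 / 3 - a * x / 2) * c x)
    (x t : ℝ) :
    deriv (fun τ => w x τ) t =
        deriv (deriv (fun y => w y t)) x + (2 * x ^ 2 + a) * deriv (fun y => w y t) x +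
          (x ^ 4 + a * x ^ 2 + 2 * x) * w x t := by
  simp only [hw]
  have hT : HasDerivAt (fun τ : ℝ => Real.exp (-(ξ ^ 2 + a ^ 2) * τ / 4))
      (Real.exp (-(ξ ^ 2 + a ^ 2) * t / 4) * (-(ξ ^ 2 + a ^ 2) / 4)) t := by
    have h := (((hasDerivAt_id t).const_mul (-(ξ ^ 2 + a ^ 2))).div_const 4).exp
    simpa using h
  generalize Real.exp (-(ξ ^ 2 + a ^ 2) * t / 4) = T at hT ⊢
  have hE : ∀ y : ℝ, HasDerivAt (fun y : ℝ => Real.exp (-y ^ 3 / 3 - a * y / 2))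
      (Real.exp (-y ^ 3 / 3 - a * y / 2) * (-y ^ 2 - a / 2)) y := by
    intro y
    have h := ((((hasDerivAt_id y).pow 3).neg.div_const 3).sub
      (((hasDerivAt_id y).const_mul a).div_const 2)).exp
    refine h.congr_deriv ?_
    simp
    ring
  have hg : HasDerivAt (fun y : ℝ => -y ^ 2 - a / 2) (-2 * x) x := by
    refine (((hasDerivAt_id x).pow 2).neg.sub_const (a / 2)).congr_deriv ?_
    simp
  have h1 : deriv (fun y => T * Real.exp (-y ^ 3 / 3 - a * y / 2) * c y) =
      fun y => T * (Real.exp (-y ^ 3 / 3 - a * y / 2) * (-y ^ 2 - a / 2)) * c y +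
        T * Real.exp (-y ^ 3 / 3 - a * y / 2) * d y :=
    funext fun y => (((hE y).const_mul T).mul (hc y)).deriv
  have h2 := (((((hE x).mul hg).const_mul T).mul (hc x)).add
    (((hE x).const_mul T).mul (hd x))).deriv
  have h3 := ((hT.mul_const (Real.exp (-x ^ 3 / 3 - a * x / 2))).mul_const (c x)).deriv
  rw [h1, h3]
  refine Eq.trans ?_ (congrArg (fun z => z + _ + _) h2.symm)
  simp only [Pi.mul_apply]
  ring

/-- w₁(x,t) = e^{−(ξ²+a²)t/4}e^{−x³/3−ax/2}cos(xξ/2) and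
w₂(x,t) = e^{−(ξ²+a²)t/4}e^{−x³/3−ax/2}sin(xξ/2) satisfy
u_t = u_xx + (2x²+a)u_x + (x⁴+ax²+2x)u everywhere. -/
theorem quartic_potential_elementary_solutions
    (a ξ : ℝ) (w₁ w₂ : ℝ → ℝ → ℝ)
    (hw₁ : ∀ x t : ℝ, w₁ x t =
      Real.exp (-(ξ ^ 2 + a ^ 2) * t / 4) * Real.exp (-x ^ 3 / 3 - a * x / 2) *
        Real.cos (x * ξ / 2))
    (hw₂ : ∀ x t : ℝ, w₂ x t =
      Real.exp (-(ξ ^ 2 + a ^ 2) * t / 4) * Real.exp (-x ^ 3 / 3 - a * x / 2) *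
        Real.sin (x * ξ / 2)) :
    (∀ x t : ℝ,
      deriv (fun τ => w₁ x τ) t =
        deriv (deriv (fun y => w₁ y t)) x + (2 * x ^ 2 + a) * deriv (fun y => w₁ y t) x +
          (x ^ 4 + a * x ^ 2 + 2 * x) * w₁ x t) ∧
    (∀ x t : ℝ,
      deriv (fun τ => w₂ x τ) t =
        deriv (deriv (fun y => w₂ y t)) x + (2 * x ^ 2 + a) * deriv (fun y => w₂ y t) x +
          (x ^ 4 + a * x ^ 2 + 2 * x) * w₂ x t) := by
  have hlin (x : ℝ) : HasDerivAt (fun y : ℝ => y * ξ / 2) (ξ / 2) x := by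
    simpa using ((hasDerivAt_id x).mul_const ξ).div_const 2
  constructor
  · refine pde_of_harmonic a ξ (fun x => Real.cos (x * ξ / 2))
      (fun x => -Real.sin (x * ξ / 2) * (ξ / 2)) w₁ (fun x => (hlin x).cos) (fun x => ?_) hw₁
    exact ((hlin x).sin.neg.mul_const (ξ / 2)).congr_deriv (by ring)
  · refine pde_of_harmonic a ξ (fun x => Real.sin (x * ξ / 2))
      (fun x => Real.cos (x * ξ / 2) * (ξ / 2)) w₂ (fun x => (hlin x).sin) (fun x => ?_) hw₂
    exact ((hlin x).cos.mul_const (ξ / 2)).congr_deriv (by ring)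
end

section
/- Let σ, A, B : [0,∞) → ℝ be continuous functions and let ξ ∈ ℝ. Define E(t) = exp(−∫₀ᵗ B(s) ds), k(t) = ∫₀ᵗ σ(y) E(y)² dy, and C(t) = ∫₀ᵗ A(y) E(y) dy. Then the functions u_c(x,t) = exp(−ξ² k(t))·cos(ξ(x·E(t) + C(t))) and u_s(x,t) = exp(−ξ² k(t))·sin(ξ(x·E(t) + C(t))) satisfy the time-dependent PDE ∂u/∂t = σ(t)·∂²u/∂x² + (A(t) − B(t)·x)·∂u/∂x at every point (x,t) with x ∈ ℝ and t > 0. -/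
/-!
By the fundamental theorem of calculus, `E' = -B E`, `k' = σ E²` and `C' = A E` at every `t > 0`.
The phase `θ = ξ (x E(t) + C(t))` therefore satisfies `θ_t = (A - B x) ξ E = (A - B x) θ_x`, so
its contribution to `u_t` is exactly the drift term `(A - B x) u_x`. Since `θ` is affine in `x`,
sine and cosine give `u_xx = -ξ² E² u`, and the damping factor `exp (-ξ² k)` contributes
`-ξ² σ E² u = σ u_xx`.

The coefficients are only continuous on `[0, ∞)`. Replacing `f` by the globally continuous function
`s ↦ f (max s 0)` leaves the integrals over `[0, t]`, `t ≥ 0`, unchanged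
(`integral_eq_integral_max`), which yields continuity of `E` on `[0, ∞)` and the derivatives above.
-/

theorem continuous_comp_max {f : ℝ → ℝ} (hf : ContinuousOn f (Set.Ici 0)) :
    Continuous (fun s => f (max s 0)) :=
  hf.comp_continuous (by fun_prop) (fun s => le_max_right s 0)

theorem integral_eq_integral_max (f : ℝ → ℝ) {t : ℝ} (ht : 0 ≤ t) :
    ∫ s in (0:ℝ)..t, f s = ∫ s in (0:ℝ)..t, f (max s 0) := by
  refine intervalIntegral.integral_congr fun s hs => ?_
  rw [Set.uIcc_of_le ht] at hs
  simp only [max_eq_left hs.1]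

theorem continuousOn_primitive_Ici {f : ℝ → ℝ} (hf : ContinuousOn f (Set.Ici 0)) :
    ContinuousOn (fun t => ∫ s in (0:ℝ)..t, f s) (Set.Ici 0) := by
  have h : Continuous (fun t => ∫ s in (0:ℝ)..t, f (max s 0)) :=
    intervalIntegral.continuous_primitive
      (fun a b => (continuous_comp_max hf).intervalIntegrable a b) 0
  exact h.continuousOn.congr fun t ht => integral_eq_integral_max f ht

theorem hasDerivAt_primitive_of_pos {f : ℝ → ℝ} (hf : ContinuousOn f (Set.Ici 0)) {t : ℝ}
    (ht : 0 < t) : HasDerivAt (fun t => ∫ s in (0:ℝ)..t, f s) (f t) t := by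
  have h := (continuous_comp_max hf).integral_hasStrictDerivAt 0 t |>.hasDerivAt
  rw [max_eq_left ht.le] at h
  refine h.congr_of_eventuallyEq ?_
  filter_upwards [lt_mem_nhds ht] with s hs using integral_eq_integral_max f hs.le

/-- For continuous σ, A, B on [0,∞), with E(t) = exp(−∫₀ᵗB), k(t) = ∫₀ᵗ σ(y)E(y)² dy and
C(t) = ∫₀ᵗ A(y)E(y) dy, the functions u_c(x,t) = exp(−ξ²k(t))cos(ξ(xE(t)+C(t))) and
u_s(x,t) = exp(−ξ²k(t))sin(ξ(xE(t)+C(t))) satisfy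
u_t = σ(t)u_xx + (A(t) − B(t)x)u_x for t > 0. -/
theorem time_dependent_OU_elementary_solutions
    (σ A B : ℝ → ℝ)
    (hσ : ContinuousOn σ (Set.Ici 0)) (hA : ContinuousOn A (Set.Ici 0))
    (hB : ContinuousOn B (Set.Ici 0))
    (ξ : ℝ) (E k C : ℝ → ℝ)
    (hE : ∀ t : ℝ, E t = Real.exp (-∫ s in (0:ℝ)..t, B s))
    (hk : ∀ t : ℝ, k t = ∫ y in (0:ℝ)..t, σ y * (E y) ^ 2)
    (hC : ∀ t : ℝ, C t = ∫ y in (0:ℝ)..t, A y * E y)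
    (uc us : ℝ → ℝ → ℝ)
    (huc : ∀ x t : ℝ, uc x t = Real.exp (-ξ ^ 2 * k t) * Real.cos (ξ * (x * E t + C t)))
    (hus : ∀ x t : ℝ, us x t = Real.exp (-ξ ^ 2 * k t) * Real.sin (ξ * (x * E t + C t))) :
    (∀ x t : ℝ, 0 < t →
      deriv (fun τ => uc x τ) t =
        σ t * deriv (deriv (fun y => uc y t)) x + (A t - B t * x) * deriv (fun y => uc y t) x) ∧
    (∀ x t : ℝ, 0 < t →
      deriv (fun τ => us x τ) t =
        σ t * deriv (deriv (fun y => us y t)) x + (A t - B t * x) * deriv (fun y => us y t) x) := by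
  have hEc : ContinuousOn E (Set.Ici 0) :=
    (Real.continuous_exp.comp_continuousOn (continuousOn_primitive_Ici hB).neg).congr
      fun t _ => hE t
  have hE' : ∀ t, 0 < t → HasDerivAt E (-B t * E t) t := fun t ht => by
    have h := (hasDerivAt_primitive_of_pos hB ht).neg.exp
    rw [show E = fun t => Real.exp (-∫ s in (0:ℝ)..t, B s) from funext hE]
    exact h.congr_deriv (mul_comm _ _)
  have hk' : ∀ t, 0 < t → HasDerivAt k (σ t * E t ^ 2) t := fun t ht => by
    rw [show k = _ from funext hk]
    exact hasDerivAt_primitive_of_pos (hσ.mul (hEc.pow 2)) ht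
  have hC' : ∀ t, 0 < t → HasDerivAt C (A t * E t) t := fun t ht => by
    rw [show C = _ from funext hC]
    exact hasDerivAt_primitive_of_pos (hA.mul hEc) ht
  have hθt : ∀ x t, 0 < t → HasDerivAt (fun τ => ξ * (x * E τ + C τ))
      (ξ * (x * (-B t * E t) + A t * E t)) t := fun x t ht =>
    (((hE' t ht).const_mul x).add (hC' t ht)).const_mul ξ
  have hθx : ∀ x t, HasDerivAt (fun y => ξ * (y * E t + C t)) (ξ * (1 * E t)) x := fun x t =>
    (((hasDerivAt_id x).mul_const (E t)).add_const (C t)).const_mul ξ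
  have hdamp : ∀ t, 0 < t → HasDerivAt (fun τ => Real.exp (-ξ ^ 2 * k τ))
      (Real.exp (-ξ ^ 2 * k t) * (-ξ ^ 2 * (σ t * E t ^ 2))) t := fun t ht =>
    ((hk' t ht).const_mul (-ξ ^ 2)).exp
  refine ⟨fun x t ht => ?_, fun x t ht => ?_⟩
  · have hx : deriv (fun y => Real.exp (-ξ ^ 2 * k t) * Real.cos (ξ * (y * E t + C t))) =
        fun y => Real.exp (-ξ ^ 2 * k t) * (-Real.sin (ξ * (y * E t + C t)) * (ξ * (1 * E t))) :=
      funext fun y => ((hθx y t).cos.const_mul _).deriv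
    have hxx := (((hθx x t).sin.neg.mul_const (ξ * (1 * E t))).const_mul
      (Real.exp (-ξ ^ 2 * k t))).deriv
    have ht' := ((hdamp t ht).fun_mul (hθt x t ht).cos).deriv
    simp only [huc]
    rw [hx, ht']
    erw [hxx]
    ring
  · have hx : deriv (fun y => Real.exp (-ξ ^ 2 * k t) * Real.sin (ξ * (y * E t + C t))) =
        fun y => Real.exp (-ξ ^ 2 * k t) * (Real.cos (ξ * (y * E t + C t)) * (ξ * (1 * E t))) :=
      funext fun y => ((hθx y t).sin.const_mul _).deriv
    have hxx := (((hθx x t).cos.mul_const (ξ * (1 * E t))).const_mul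
      (Real.exp (-ξ ^ 2 * k t))).deriv
    have ht' := ((hdamp t ht).fun_mul (hθt x t ht).sin).deriv
    simp only [hus]
    rw [hx, ht']
    erw [hxx]
    ring
end

section
/- Let λ ∈ ℝ. The functions w₁(x,t) = exp(t + x²/2 − (λ²/4)(e^{4t} − 1))·cos(λ x e^{2t}) and w₂(x,t) = exp(t + x²/2 − (λ²/4)(e^{4t} − 1))·sin(λ x e^{2t}) satisfy the harmonic oscillator equation ∂u/∂t = ∂²u/∂x² − x²·u at every point (x,t) ∈ ℝ². -/
/-!
Both functions have the form `u = e^φ g(θ)` with `φ = t + x²/2 - (λ²/4)(e^{4t} - 1)`,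
`θ = λ x e^{2t}` and `g'' = -g` (`g = cos` or `g = sin`). Writing `k = λ e^{2t}`, one has
`φ_t = 1 - k²`, `φ_x = x`, `θ_t = 2xk`, `θ_x = k`, hence
`u_t = e^φ ((1 - k²) g(θ) + 2xk g'(θ))` and
`u_xx = e^φ ((x² + 1 - k²) g(θ) + 2xk g'(θ))`, which differ exactly by `x² u`.
The lemma `oscillator_solution` carries out this computation for a general such `g`.
-/

/-- The equation `u_t = u_xx - x² u` for `u = e^φ g(θ)`, where `h` plays the role of `g'`
and `g'' = -g`. -/
lemma oscillator_solution (lam : ℝ) (g h : ℝ → ℝ) (hg : ∀ y, HasDerivAt g (h y) y)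
    (hh : ∀ y, HasDerivAt h (-g y) y) (w : ℝ → ℝ → ℝ)
    (hw : ∀ x t : ℝ, w x t =
      Real.exp (t + x ^ 2 / 2 - (lam ^ 2 / 4) * (Real.exp (4 * t) - 1)) *
        g (lam * x * Real.exp (2 * t))) (x t : ℝ) :
    deriv (fun τ => w x τ) t = deriv (deriv (fun y => w y t)) x - x ^ 2 * w x t := by
  simp only [hw]
  have hE : ∀ y, HasDerivAt
      (fun y => Real.exp (t + y ^ 2 / 2 - (lam ^ 2 / 4) * (Real.exp (4 * t) - 1)))
      (Real.exp (t + y ^ 2 / 2 - (lam ^ 2 / 4) * (Real.exp (4 * t) - 1)) * y) y := by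
    intro y
    have h1 := (((((hasDerivAt_id y).pow 2).div_const 2).const_add t).sub_const
      ((lam ^ 2 / 4) * (Real.exp (4 * t) - 1))).exp
    refine h1.congr_deriv ?_
    simp
  have hθ : ∀ y, HasDerivAt (fun y => lam * y * Real.exp (2 * t))
      (lam * Real.exp (2 * t)) y := by
    intro y
    refine (((hasDerivAt_id y).const_mul lam).mul_const (Real.exp (2 * t))).congr_deriv ?_
    simp
  have hux : deriv (fun y =>
      Real.exp (t + y ^ 2 / 2 - (lam ^ 2 / 4) * (Real.exp (4 * t) - 1)) *
        g (lam * y * Real.exp (2 * t))) = fun y =>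
      Real.exp (t + y ^ 2 / 2 - (lam ^ 2 / 4) * (Real.exp (4 * t) - 1)) *
        (y * g (lam * y * Real.exp (2 * t)) +
          h (lam * y * Real.exp (2 * t)) * (lam * Real.exp (2 * t))) := by
    funext y
    refine (((hE y).mul ((hg _).comp y (hθ y))).congr_deriv ?_).deriv
    simp only [Function.comp_apply]
    ring
  have huxx := (hE x).mul (((hasDerivAt_id x).mul ((hg _).comp x (hθ x))).add
    (((hh _).comp x (hθ x)).mul_const (lam * Real.exp (2 * t))))
  have hexp : ∀ c : ℝ, HasDerivAt (fun τ => Real.exp (c * τ)) (Real.exp (c * t) * c) t := by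
    intro c
    refine ((hasDerivAt_id t).const_mul c).exp.congr_deriv ?_
    simp
  have hut := ((((hasDerivAt_id t).add_const (x ^ 2 / 2)).sub
    (((hexp 4).sub_const 1).const_mul (lam ^ 2 / 4))).exp).mul
      ((hg _).comp t ((hexp 2).const_mul (lam * x)))
  have h4 : Real.exp (4 * t) = Real.exp (2 * t) ^ 2 := by
    rw [← Real.exp_nat_mul]
    congr 1
    push_cast
    ring
  rw [hux]
  refine hut.deriv.trans ?_
  refine Eq.trans ?_ (congrArg (· - _) huxx.deriv.symm)
  simp only [Function.comp_apply, id, Pi.add_apply, Pi.sub_apply, Pi.mul_apply, h4]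
  ring

/-- w₁(x,t) = exp(t + x²/2 − (λ²/4)(e^{4t}−1))cos(λxe^{2t}) and
w₂(x,t) = exp(t + x²/2 − (λ²/4)(e^{4t}−1))sin(λxe^{2t}) satisfy the harmonic oscillator
equation u_t = u_xx − x²u everywhere. -/
theorem harmonic_oscillator_elementary_solutions
    (lam : ℝ) (w₁ w₂ : ℝ → ℝ → ℝ)
    (hw₁ : ∀ x t : ℝ, w₁ x t =
      Real.exp (t + x ^ 2 / 2 - (lam ^ 2 / 4) * (Real.exp (4 * t) - 1)) *
        Real.cos (lam * x * Real.exp (2 * t)))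
    (hw₂ : ∀ x t : ℝ, w₂ x t =
      Real.exp (t + x ^ 2 / 2 - (lam ^ 2 / 4) * (Real.exp (4 * t) - 1)) *
        Real.sin (lam * x * Real.exp (2 * t))) :
    (∀ x t : ℝ,
      deriv (fun τ => w₁ x τ) t = deriv (deriv (fun y => w₁ y t)) x - x ^ 2 * w₁ x t) ∧
    (∀ x t : ℝ,
      deriv (fun τ => w₂ x τ) t = deriv (deriv (fun y => w₂ y t)) x - x ^ 2 * w₂ x t) := by
  refine ⟨oscillator_solution lam Real.cos (fun y => -Real.sin y) Real.hasDerivAt_cos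
    (fun y => (Real.hasDerivAt_sin y).neg) w₁ hw₁,
    oscillator_solution lam Real.sin Real.cos Real.hasDerivAt_sin Real.hasDerivAt_cos w₂ hw₂⟩
end

section
/- Let ξ ∈ ℝ and b > 0, and set m(x) = √(2x) − √(2b). The functions w₁(x,t) = e^{−ξ²t} x^{−3/2} ( 2ξ√x·sin(ξ·m(x)) + √2·cos(ξ·m(x)) ) and w₂(x,t) = e^{−ξ²t} x^{−3/2} ( √2·sin(ξ·m(x)) − 2ξ√x·cos(ξ·m(x)) ) satisfy the Kolmogorov backward equation of the five-dimensional squared Bessel process, ∂u/∂t = 2x·∂²u/∂x² + 5·∂u/∂x, at every point (x,t) with x > 0 and t ∈ ℝ. -/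
/-!
In the radial variable `R = √x` the operator `2x ∂²/∂x² + 5 ∂/∂x` becomes `½ (∂²/∂R² + (4/R) ∂/∂R)`,
half the radial Laplacian in dimension five (`radial_substitution`). With `k = √2 ξ`, the function
`F(R) = (kR sin(kR + φ) + cos(kR + φ)) / R³`, which is `-(1/R) d/dR (cos(kR + φ) / R)`, satisfies
`F'' + (4/R) F' = -k² F = -2ξ² F` for every phase `φ` (`radialProfile_ode`). Up to the factor
`√2 e^{-ξ²t}`, `w₁` is `F(√x)` with phase `-ξ√(2b)`, and `w₂` is the same with the phase moved
back by `π/2`.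
-/

/-- The radial eigenfunction of the five-dimensional Laplacian with frequency `k` and phase `φ`. -/
noncomputable def radialProfile (k φ R : ℝ) : ℝ :=
  (k * R * Real.sin (k * R + φ) + Real.cos (k * R + φ)) / R ^ 3

/-- The first derivative of `radialProfile k φ` at `R ≠ 0`. -/
noncomputable def radialProfile' (k φ R : ℝ) : ℝ :=
  k ^ 2 * Real.cos (k * R + φ) / R ^ 2 -
    3 * (k * R * Real.sin (k * R + φ) + Real.cos (k * R + φ)) / R ^ 4

/-- The second derivative of `radialProfile k φ` at `R ≠ 0`. -/
noncomputable def radialProfile'' (k φ R : ℝ) : ℝ :=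
  -(k ^ 3 * Real.sin (k * R + φ) / R ^ 2) - 5 * k ^ 2 * Real.cos (k * R + φ) / R ^ 3 +
    12 * (k * R * Real.sin (k * R + φ) + Real.cos (k * R + φ)) / R ^ 5

lemma hasDerivAt_phase (k φ R : ℝ) : HasDerivAt (fun R => k * R + φ) k R := by
  simpa using ((hasDerivAt_id R).const_mul k).add_const φ

lemma hasDerivAt_numerator (k φ R : ℝ) :
    HasDerivAt (fun R => k * R * Real.sin (k * R + φ) + Real.cos (k * R + φ))
      (k ^ 2 * R * Real.cos (k * R + φ)) R := by
  have h := hasDerivAt_phase k φ R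
  have hk : HasDerivAt (fun R => k * R) k R := by simpa using (hasDerivAt_id R).const_mul k
  refine ((hk.mul h.sin).add h.cos).congr_deriv ?_
  ring

lemma hasDerivAt_radialProfile (k φ : ℝ) {R : ℝ} (hR : 0 < R) :
    HasDerivAt (radialProfile k φ) (radialProfile' k φ R) R := by
  have hR' : R ≠ 0 := hR.ne'
  refine ((hasDerivAt_numerator k φ R).div (hasDerivAt_pow 3 R) (pow_ne_zero 3 hR')).congr_deriv ?_
  unfold radialProfile'
  push_cast
  field_simp

lemma hasDerivAt_radialProfile' (k φ : ℝ) {R : ℝ} (hR : 0 < R) :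
    HasDerivAt (radialProfile' k φ) (radialProfile'' k φ R) R := by
  have hR' : R ≠ 0 := hR.ne'
  have h1 := ((hasDerivAt_phase k φ R).cos.const_mul (k ^ 2)).div (hasDerivAt_pow 2 R)
    (pow_ne_zero 2 hR')
  have h2 := ((hasDerivAt_numerator k φ R).const_mul 3).div (hasDerivAt_pow 4 R)
    (pow_ne_zero 4 hR')
  refine (h1.sub h2).congr_deriv ?_
  unfold radialProfile''
  push_cast
  field_simp
  ring

lemma radialProfile_ode (k φ : ℝ) {R : ℝ} (hR : 0 < R) :
    radialProfile'' k φ R + 4 / R * radialProfile' k φ R = -k ^ 2 * radialProfile k φ R := by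
  unfold radialProfile radialProfile' radialProfile''
  field_simp
  ring

/-- Under `R = √x` the squared Bessel generator in dimension five becomes half the radial
Laplacian. -/
lemma radial_substitution {F F' F'' u : ℝ → ℝ}
    (hF : ∀ R, 0 < R → HasDerivAt F (F' R) R) (hF' : ∀ R, 0 < R → HasDerivAt F' (F'' R) R)
    (hu : ∀ x, 0 < x → u x = F (Real.sqrt x)) {x : ℝ} (hx : 0 < x) :
    2 * x * deriv (deriv u) x + 5 * deriv u x =
      (F'' (Real.sqrt x) + 4 / Real.sqrt x * F' (Real.sqrt x)) / 2 := by
  have h1 : ∀ y, 0 < y → deriv u y = F' (Real.sqrt y) * (1 / (2 * Real.sqrt y)) := by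
    intro y hy
    have heq : u =ᶠ[nhds y] fun z => F (Real.sqrt z) := by
      filter_upwards [lt_mem_nhds hy] with z hz using hu z hz
    rw [heq.deriv_eq]
    exact ((hF _ (Real.sqrt_pos.2 hy)).comp y (Real.hasDerivAt_sqrt hy.ne')).deriv
  have heq : deriv u =ᶠ[nhds x] fun z => F' (Real.sqrt z) * (1 / (2 * Real.sqrt z)) := by
    filter_upwards [lt_mem_nhds hx] with z hz using h1 z hz
  have hR : 0 < Real.sqrt x := Real.sqrt_pos.2 hx
  have hs := Real.hasDerivAt_sqrt hx.ne'
  have h2 := ((hF' _ hR).comp x hs).mul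
    ((hasDerivAt_const x (1 : ℝ)).div (hs.const_mul 2) (by positivity))
  have h3 : deriv (deriv u) x = _ := heq.deriv_eq.trans h2.deriv
  rw [h3, h1 x hx]
  have hxs : x = Real.sqrt x ^ 2 := (Real.sq_sqrt hx.le).symm
  simp only [Function.comp_apply, Pi.div_apply]
  generalize Real.sqrt x = R at *
  subst hxs
  field_simp
  ring

lemma rpow_neg_three_halves {x : ℝ} (hx : 0 < x) :
    x ^ (-(3 : ℝ) / 2) = (Real.sqrt x ^ 3)⁻¹ := by
  rw [Real.sqrt_eq_rpow, ← Real.rpow_natCast, ← Real.rpow_mul hx.le, ← Real.rpow_neg hx.le]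
  norm_num

/-- The backward equation for `c e^{-ξ²t} F(√x)`, where `F` is the radial eigenfunction of
frequency `√2 ξ`. -/
lemma backward_equation (ξ φ c : ℝ) (w : ℝ → ℝ → ℝ)
    (hw : ∀ x t : ℝ, 0 < x → w x t =
      c * Real.exp (-ξ ^ 2 * t) * radialProfile (Real.sqrt 2 * ξ) φ (Real.sqrt x))
    (x t : ℝ) (hx : 0 < x) :
    deriv (fun τ => w x τ) t =
      2 * x * deriv (deriv (fun y => w y t)) x + 5 * deriv (fun y => w y t) x := by
  rw [radial_substitution
    (fun R hR => (hasDerivAt_radialProfile (Real.sqrt 2 * ξ) φ hR).const_mul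
      (c * Real.exp (-ξ ^ 2 * t)))
    (fun R hR => (hasDerivAt_radialProfile' (Real.sqrt 2 * ξ) φ hR).const_mul
      (c * Real.exp (-ξ ^ 2 * t)))
    (fun y hy => hw y t hy) hx]
  have ht : HasDerivAt (fun τ => w x τ) (c * (Real.exp (-ξ ^ 2 * t) * (-ξ ^ 2)) *
      radialProfile (Real.sqrt 2 * ξ) φ (Real.sqrt x)) t := by
    rw [funext fun τ => hw x τ hx]
    have h : HasDerivAt (fun τ : ℝ => -ξ ^ 2 * τ) (-ξ ^ 2) t := by
      simpa using (hasDerivAt_id t).const_mul (-ξ ^ 2)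
    exact (h.exp.const_mul c).mul_const _
  rw [ht.deriv]
  have hode := radialProfile_ode (Real.sqrt 2 * ξ) φ (Real.sqrt_pos.2 hx)
  have h2 : Real.sqrt 2 ^ 2 = 2 := Real.sq_sqrt (by norm_num)
  rw [mul_pow, h2] at hode
  linear_combination (-(c * Real.exp (-ξ ^ 2 * t)) / 2) * hode

/-- With m(x) = √(2x) − √(2b), the functions
w₁(x,t) = e^{−ξ²t}x^{−3/2}(2ξ√x sin(ξm(x)) + √2 cos(ξm(x))) and
w₂(x,t) = e^{−ξ²t}x^{−3/2}(√2 sin(ξm(x)) − 2ξ√x cos(ξm(x))) satisfy the Kolmogorov backward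
equation of the five-dimensional squared Bessel process u_t = 2x u_xx + 5 u_x for x > 0. -/
theorem squaredBessel5_elementary_solutions
    (ξ b : ℝ) (hb : 0 < b) (m : ℝ → ℝ)
    (hm : ∀ x : ℝ, m x = Real.sqrt (2 * x) - Real.sqrt (2 * b))
    (w₁ w₂ : ℝ → ℝ → ℝ)
    (hw₁ : ∀ x t : ℝ, w₁ x t =
      Real.exp (-ξ ^ 2 * t) * x ^ (-(3:ℝ)/2) *
        (2 * ξ * Real.sqrt x * Real.sin (ξ * m x) + Real.sqrt 2 * Real.cos (ξ * m x)))
    (hw₂ : ∀ x t : ℝ, w₂ x t =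
      Real.exp (-ξ ^ 2 * t) * x ^ (-(3:ℝ)/2) *
        (Real.sqrt 2 * Real.sin (ξ * m x) - 2 * ξ * Real.sqrt x * Real.cos (ξ * m x))) :
    (∀ x t : ℝ, 0 < x →
      deriv (fun τ => w₁ x τ) t =
        2 * x * deriv (deriv (fun y => w₁ y t)) x + 5 * deriv (fun y => w₁ y t) x) ∧
    (∀ x t : ℝ, 0 < x →
      deriv (fun τ => w₂ x τ) t =
        2 * x * deriv (deriv (fun y => w₂ y t)) x + 5 * deriv (fun y => w₂ y t) x) := by
  have hθ : ∀ x, ξ * m x = Real.sqrt 2 * ξ * Real.sqrt x + -(ξ * Real.sqrt (2 * b)) := by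
    intro x
    rw [hm, Real.sqrt_mul (by norm_num : (0 : ℝ) ≤ 2) x]
    ring
  have h2 : Real.sqrt 2 * Real.sqrt 2 = 2 := Real.mul_self_sqrt (by norm_num)
  constructor
  · refine backward_equation ξ (-(ξ * Real.sqrt (2 * b))) (Real.sqrt 2) w₁ fun x t hx => ?_
    rw [hw₁, rpow_neg_three_halves hx, radialProfile, ← hθ]
    linear_combination (-(Real.exp (-ξ ^ 2 * t) * (Real.sqrt x ^ 3)⁻¹ *
      ξ * Real.sqrt x * Real.sin (ξ * m x))) * h2
  · refine backward_equation ξ (-(ξ * Real.sqrt (2 * b)) - Real.pi / 2) (Real.sqrt 2) w₂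
      fun x t hx => ?_
    rw [hw₂, rpow_neg_three_halves hx, radialProfile, ← add_sub_assoc, ← hθ,
      Real.sin_sub_pi_div_two, Real.cos_sub_pi_div_two]
    linear_combination (Real.exp (-ξ ^ 2 * t) * (Real.sqrt x ^ 3)⁻¹ *
      ξ * Real.sqrt x * Real.cos (ξ * m x)) * h2
end
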